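/- The conflation function Confl does not belong to the clone of BD⊃,F; consequently, the conflation connective is not definable in BD⊃,F, and BD⊃,F is not truth-functionally complete. -/

import Mathlib

/-!
The set `{t, b, f}` is closed under every basic truth function of the logic, hence under every
operation in the clone (`InClone.ne_n`). Conflation sends `b`, which lies in that set, to `n`,
which does not; so it is not in the clone, and the clone does not contain every operation.
-/

namespace BD

/-- The four truth values of Belnap-Dunn logic. -/
inductive V4 : Type
  | t | b | n | f
deriving DecidableEq

/-- The set of designated truth values. -/
def Desig : Set V4 := {V4.t, V4.b}

/-- The truth function of negation. -/
def tnot : V4 → V4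
  | .t => .f
  | .f => .t
  | .b => .b
  | .n => .n

/-- The truth function of conjunction: the meet in the truth order (f least, t
greatest, b and n incomparable). -/
def tand : V4 → V4 → V4
  | .f, _ => .f
  | _, .f => .f
  | .t, a => a
  | a, .t => a
  | .b, .b => .b
  | .n, .n => .n
  | .b, .n => .f
  | .n, .b => .f

/-- The truth function of disjunction: the join in the truth order. -/
def tor : V4 → V4 → V4
  | .t, _ => .t
  | _, .t => .t
  | .f, a => a
  | a, .f => a
  | .b, .b => .b
  | .n, .n => .n
  | .b, .n => .t
  | .n, .b => .t

/-- The truth function of implication. -/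
def timp : V4 → V4 → V4
  | .t, a => a
  | .b, a => a
  | .n, _ => .t
  | .f, _ => .t

open Classical in
/-- Greatest lower bound of a set of truth values (intended for nonempty sets). -/
noncomputable def tInf (V : Set V4) : V4 :=
  if V4.f ∈ V ∨ (V4.b ∈ V ∧ V4.n ∈ V) then .f
  else if V4.b ∈ V then .b
  else if V4.n ∈ V then .n
  else .t

open Classical in
/-- Least upper bound of a set of truth values (intended for nonempty sets). -/
noncomputable def tSup (V : Set V4) : V4 :=
  if V4.t ∈ V ∨ (V4.b ∈ V ∧ V4.n ∈ V) then .t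
  else if V4.b ∈ V then .b
  else if V4.n ∈ V then .n
  else .f

/-- The clone of BD⊃,F: the smallest set of finitary operations on V4 containing all
projections and the truth functions F̃, ¬̃, ∧̃, ∨̃, ⊃̃, closed under composition. -/
inductive InClone : (k : ℕ) → ((Fin k → V4) → V4) → Prop where
  | proj (k : ℕ) (i : Fin k) : InClone k (fun v => v i)
  | fls : InClone 0 (fun _ => V4.f)
  | neg : InClone 1 (fun v => tnot (v 0))
  | and : InClone 2 (fun v => tand (v 0) (v 1))
  | or : InClone 2 (fun v => tor (v 0) (v 1))
  | imp : InClone 2 (fun v => timp (v 0) (v 1))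
  | comp (k m : ℕ) (g : (Fin m → V4) → V4) (h : Fin m → (Fin k → V4) → V4) :
      InClone m g → (∀ i : Fin m, InClone k (h i)) →
      InClone k (fun v => g (fun i => h i v))

/-- The conflation truth function. -/
def confl : V4 → V4
  | .t => .t
  | .f => .f
  | .b => .n
  | .n => .b

/-- The clone preserves the subset `V4 \ {n} = {t, b, f}`. -/
theorem InClone.ne_n {k : ℕ} {g : (Fin k → V4) → V4} (hg : InClone k g) :
    ∀ v : Fin k → V4, (∀ i, v i ≠ V4.n) → g v ≠ V4.n := by
  induction hg with
  | proj k i => exact fun v hv => hv i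
  | fls => exact fun v _ => V4.noConfusion
  | neg =>
    intro v hv
    have h0 := hv 0
    cases h : v 0 <;> simp_all [tnot]
  | and =>
    intro v hv
    have h0 := hv 0
    have h1 := hv 1
    cases h : v 0 <;> cases h' : v 1 <;> simp_all [tand]
  | or =>
    intro v hv
    have h0 := hv 0
    have h1 := hv 1
    cases h : v 0 <;> cases h' : v 1 <;> simp_all [tor]
  | imp =>
    intro v hv
    have h0 := hv 0
    have h1 := hv 1
    cases h : v 0 <;> cases h' : v 1 <;> simp_all [timp]
  | comp k m g h _ _ ihg ihh =>
    exact fun v hv => ihg _ fun i => ihh i v hv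

/-- conflation is not in the clone of BD⊃,F, so the conflation
connective is not definable in BD⊃,F and BD⊃,F is not truth-functionally complete. -/
theorem confl_not_definable :
    ¬ InClone 1 (fun v => confl (v 0)) ∧
    ¬ (∀ (k : ℕ) (g : (Fin k → V4) → V4), InClone k g) := by
  have key : ¬ InClone 1 (fun v => confl (v 0)) := fun h =>
    h.ne_n (fun _ => V4.b) (fun _ => V4.noConfusion) rfl
  exact ⟨key, fun h => key (h 1 _)⟩

end BD
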